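/- arXiv:2502.20666 — 4 statements merged into one kernel-verified Lean document; each statement's English description precedes it below -/
import Mathlib

section
/- Let X be a complex Banach space and L an invertible bounded linear operator on X. Suppose there is a direct-sum decomposition X = A ⊕ B into closed subspaces such that L(A) ⊆ A, L⁻¹(B) ⊆ B, and Lⁿ|_A → 0 and L⁻ⁿ|_B → 0 strongly (pointwise) as n → ∞. Then ⋃_{n,m≥0} (Lⁿ(B) ∩ L⁻ᵐ(A)) is a subspace of the set H of homoclinic points of L which is invariant (L maps it onto itself) and dense in H. -/
open Filter Topology

variable {X : Type*} [NormedAddCommGroup X] [NormedSpace ℂ X] [CompleteSpace X]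

/-- The set of homoclinic points of `L`: points whose orbit tends to `0`
both forwards and backwards. -/
def Homoclinic (L : X ≃L[ℂ] X) : Set X :=
  {x : X | Tendsto (fun n : ℤ => (L ^ n) x) atTop (𝓝 0) ∧
    Tendsto (fun n : ℤ => (L ^ n) x) atBot (𝓝 0)}

theorem pow_add_app (L : X ≃L[ℂ] X) (n m : ℕ) (x : X) :
    (L ^ (n + m)) x = (L ^ n) ((L ^ m) x) := by
  rw [pow_add]; rfl

theorem symm_pow_app (L : X ≃L[ℂ] X) (n : ℕ) (x : X) :
    (L.symm ^ n) ((L ^ n) x) = x := by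
  have h : L.symm ^ n * L ^ n = 1 := by
    change L⁻¹ ^ n * L ^ n = 1
    rw [inv_pow, inv_mul_cancel]
  exact congrArg (fun f : X ≃L[ℂ] X => f x) h

theorem pow_symm_app (L : X ≃L[ℂ] X) (n : ℕ) (x : X) :
    (L ^ n) ((L.symm ^ n) x) = x := symm_pow_app L.symm n x

theorem pow_mem_of (L : X ≃L[ℂ] X) (A : Submodule ℂ X) (h : ∀ x ∈ A, L x ∈ A)
    (n : ℕ) : ∀ x ∈ A, (L ^ n) x ∈ A := by
  induction n with
  | zero => intro x hx; simpa using! hx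
  | succ k ih =>
    intro x hx
    rw [pow_add_app, pow_one]
    exact ih _ (h x hx)

theorem mem_U_iff (L : X ≃L[ℂ] X) (A B : Submodule ℂ X) (x : X) :
    x ∈ (⋃ (n : ℕ) (m : ℕ), (⇑(L ^ n) '' (B : Set X)) ∩ (⇑(L.symm ^ m) '' (A : Set X))) ↔
    ∃ n m : ℕ, (L.symm ^ n) x ∈ B ∧ (L ^ m) x ∈ A := by
  simp only [Set.mem_iUnion, Set.mem_inter_iff]
  refine exists_congr fun n => exists_congr fun m => and_congr ?_ ?_
  · constructor
    · rintro ⟨y, hy, rfl⟩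
      rw [symm_pow_app]; exact hy
    · intro h
      exact ⟨_, h, pow_symm_app L n x⟩
  · constructor
    · rintro ⟨y, hy, rfl⟩
      rw [pow_symm_app]; exact hy
    · intro h
      exact ⟨_, h, symm_pow_app L m x⟩

theorem homoclinic_iff (L : X ≃L[ℂ] X) (x : X) :
    x ∈ Homoclinic L ↔ Tendsto (fun n : ℕ => (L ^ n) x) atTop (𝓝 0) ∧
      Tendsto (fun n : ℕ => (L.symm ^ n) x) atTop (𝓝 0) := by
  have h1 : (atTop : Filter ℤ) = map (Nat.cast : ℕ → ℤ) atTop := Nat.map_cast_int_atTop.symm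
  have h2 : (atBot : Filter ℤ) = map (fun n : ℕ => -(n : ℤ)) atTop := by
    have : (atBot : Filter ℤ) = map Neg.neg atTop := by simp
    rw [this, h1, map_map]; rfl
  unfold Homoclinic
  rw [Set.mem_setOf_eq, h1, h2, tendsto_map'_iff, tendsto_map'_iff]
  refine and_congr (by simp [Function.comp_def]) ?_
  have : ∀ n : ℕ, L ^ (-(n : ℤ)) = L.symm ^ n := by
    intro n
    rw [zpow_neg, zpow_natCast, ← inv_pow]; rfl
  simp [Function.comp_def, this]

theorem tendsto_of_eventually (L : X ≃L[ℂ] X) (A : Submodule ℂ X)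
    (hA : ∀ x ∈ A, Tendsto (fun n : ℕ => (L ^ n) x) atTop (𝓝 0)) (x : X) (m : ℕ)
    (hx : (L ^ m) x ∈ A) : Tendsto (fun n : ℕ => (L ^ n) x) atTop (𝓝 0) := by
  rw [← tendsto_add_atTop_iff_nat m]
  simpa only [pow_add_app] using hA _ hx

theorem tendsto_half (L : X ≃L[ℂ] X) (A : Submodule ℂ X) (hAcl : IsClosed (A : Set X))
    (hA : ∀ x ∈ A, Tendsto (fun n : ℕ => (L ^ n) x) atTop (𝓝 0)) (u : ℕ → A)
    (hu : Tendsto u atTop (𝓝 0)) :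
    Tendsto (fun n : ℕ => (L ^ n) (u n : X)) atTop (𝓝 0) := by
  haveI : CompleteSpace A := hAcl.completeSpace_coe
  obtain ⟨C, hC⟩ := banach_steinhaus
    (g := fun n : ℕ => ((L ^ n : X ≃L[ℂ] X) : X →L[ℂ] X).comp A.subtypeL) (by
      intro x
      obtain ⟨C, hC⟩ := (hA x x.2).norm.bddAbove_range
      exact ⟨C, fun i => hC ⟨i, rfl⟩⟩)
  have h0 : Tendsto (fun n => C * ‖u n‖) atTop (𝓝 0) := by
    simpa using hu.norm.const_mul C
  refine squeeze_zero_norm (fun n => ?_) h0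
  exact (((L ^ n : X ≃L[ℂ] X) : X →L[ℂ] X).comp A.subtypeL).le_of_opNorm_le (hC n) (u n)

theorem homoclinic_dense_subspace (L : X ≃L[ℂ] X) (A B : Submodule ℂ X)
    (hAcl : IsClosed (A : Set X)) (hBcl : IsClosed (B : Set X)) (hcompl : IsCompl A B)
    (hLA : ∀ x ∈ A, L x ∈ A) (hLB : ∀ x ∈ B, L.symm x ∈ B)
    (hAstrong : ∀ x ∈ A, Tendsto (fun n : ℕ => (L ^ n) x) atTop (𝓝 0))
    (hBstrong : ∀ x ∈ B, Tendsto (fun n : ℕ => (L.symm ^ n) x) atTop (𝓝 0)) :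
    (⋃ (n : ℕ) (m : ℕ), (⇑(L ^ n) '' (B : Set X)) ∩ (⇑(L.symm ^ m) '' (A : Set X)))
        ⊆ Homoclinic L ∧
    (0 : X) ∈ (⋃ (n : ℕ) (m : ℕ), (⇑(L ^ n) '' (B : Set X)) ∩ (⇑(L.symm ^ m) '' (A : Set X))) ∧
    (∀ x ∈ (⋃ (n : ℕ) (m : ℕ), (⇑(L ^ n) '' (B : Set X)) ∩ (⇑(L.symm ^ m) '' (A : Set X))),
      ∀ y ∈ (⋃ (n : ℕ) (m : ℕ), (⇑(L ^ n) '' (B : Set X)) ∩ (⇑(L.symm ^ m) '' (A : Set X))),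
        x + y ∈ (⋃ (n : ℕ) (m : ℕ), (⇑(L ^ n) '' (B : Set X)) ∩ (⇑(L.symm ^ m) '' (A : Set X)))) ∧
    (∀ (c : ℂ), ∀ x ∈ (⋃ (n : ℕ) (m : ℕ), (⇑(L ^ n) '' (B : Set X)) ∩ (⇑(L.symm ^ m) '' (A : Set X))),
        c • x ∈ (⋃ (n : ℕ) (m : ℕ), (⇑(L ^ n) '' (B : Set X)) ∩ (⇑(L.symm ^ m) '' (A : Set X)))) ∧
    (⇑L '' (⋃ (n : ℕ) (m : ℕ), (⇑(L ^ n) '' (B : Set X)) ∩ (⇑(L.symm ^ m) '' (A : Set X)))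
      = ⋃ (n : ℕ) (m : ℕ), (⇑(L ^ n) '' (B : Set X)) ∩ (⇑(L.symm ^ m) '' (A : Set X))) ∧
    Homoclinic L ⊆
      closure (⋃ (n : ℕ) (m : ℕ), (⇑(L ^ n) '' (B : Set X)) ∩ (⇑(L.symm ^ m) '' (A : Set X))) := by
  have hA' := pow_mem_of L A hLA
  have hB' := pow_mem_of L.symm B hLB
  set U := (⋃ (n : ℕ) (m : ℕ), (⇑(L ^ n) '' (B : Set X)) ∩ (⇑(L.symm ^ m) '' (A : Set X))) with hU
  have hmem : ∀ x, x ∈ U ↔ ∃ n m : ℕ, (L.symm ^ n) x ∈ B ∧ (L ^ m) x ∈ A := mem_U_iff L A B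
  refine ⟨?_, ?_, ?_, ?_, ?_, ?_⟩
  · intro x hx
    obtain ⟨n, m, h1, h2⟩ := (hmem x).1 hx
    exact (homoclinic_iff L x).2 ⟨tendsto_of_eventually L A hAstrong x m h2,
      tendsto_of_eventually L.symm B hBstrong x n h1⟩
  · exact (hmem 0).2 ⟨0, 0, by simp, by simp⟩
  · intro x hx y hy
    obtain ⟨n, m, h1, h2⟩ := (hmem x).1 hx
    obtain ⟨n', m', h1', h2'⟩ := (hmem y).1 hy
    refine (hmem _).2 ⟨n + n', m + m', ?_, ?_⟩
    · rw [map_add]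
      refine B.add_mem ?_ ?_
      · rw [add_comm, pow_add_app]; exact hB' _ _ h1
      · rw [pow_add_app]; exact hB' _ _ h1'
    · rw [map_add]
      refine A.add_mem ?_ ?_
      · rw [add_comm, pow_add_app]; exact hA' _ _ h2
      · rw [pow_add_app]; exact hA' _ _ h2'
  · intro c x hx
    obtain ⟨n, m, h1, h2⟩ := (hmem x).1 hx
    refine (hmem _).2 ⟨n, m, ?_, ?_⟩
    · rw [map_smul]; exact B.smul_mem c h1
    · rw [map_smul]; exact A.smul_mem c h2
  · ext x
    constructor
    · rintro ⟨y, hy, rfl⟩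
      obtain ⟨n, m, h1, h2⟩ := (hmem y).1 hy
      refine (hmem _).2 ⟨n + 1, m, ?_, ?_⟩
      · rw [pow_add_app, pow_one, L.symm_apply_apply]; exact h1
      · have : (L ^ m) (L y) = L ((L ^ m) y) := by
          have h3 := pow_add_app L m 1 y
          rw [add_comm, pow_add_app, pow_one] at h3
          exact h3.symm
        rw [this]; exact hLA _ h2
    · intro hx
      obtain ⟨n, m, h1, h2⟩ := (hmem x).1 hx
      refine ⟨L.symm x, (hmem _).2 ⟨n, m + 1, ?_, ?_⟩, L.apply_symm_apply x⟩
      · have : (L.symm ^ n) (L.symm x) = L.symm ((L.symm ^ n) x) := by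
          have h3 := pow_add_app L.symm n 1 x
          rw [add_comm, pow_add_app, pow_one] at h3
          exact h3.symm
        rw [this]; exact hLB _ h1
      · rw [pow_add_app, pow_one, L.apply_symm_apply]; exact h2
  · intro x hx
    obtain ⟨hf, hb⟩ := (homoclinic_iff L x).1 hx
    have htop : Submodule.IsTopCompl A B := Submodule.IsCompl.isTopCompl_of_isClosed hcompl hAcl hBcl
    let P : X →L[ℂ] A := A.projectionOntoL B htop
    let Q : X →L[ℂ] B := B.projectionOntoL A htop.symm
    have hPQ : ∀ y, (P y : X) + Q y = y := fun y =>
      Submodule.projection_add_projection_eq_self hcompl y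
    have ha : Tendsto (fun n : ℕ => P ((L.symm ^ n) x)) atTop (𝓝 0) := by
      simpa [Function.comp_def] using (P.continuous.tendsto 0).comp hb
    have hd : Tendsto (fun n : ℕ => Q ((L ^ n) x)) atTop (𝓝 0) := by
      simpa [Function.comp_def] using (Q.continuous.tendsto 0).comp hf
    have ha' := tendsto_half L A hAcl hAstrong _ ha
    have hd' := tendsto_half L.symm B hBcl hBstrong _ hd
    have hz : Tendsto (fun n : ℕ => x - (L ^ n) (P ((L.symm ^ n) x) : X)
        - (L.symm ^ n) (Q ((L ^ n) x) : X)) atTop (𝓝 x) := by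
      simpa using (tendsto_const_nhds.sub ha').sub hd'
    refine mem_closure_of_tendsto hz (Eventually.of_forall fun n => (hmem _).2 ⟨n, n, ?_, ?_⟩)
    · rw [map_sub, map_sub, symm_pow_app]
      refine B.sub_mem ?_ (hB' _ _ (hB' _ _ (Q _).2))
      have := hPQ ((L.symm ^ n) x)
      rw [← eq_sub_iff_add_eq'] at this
      rw [← this]; exact (Q _).2
    · rw [sub_right_comm, map_sub, map_sub, pow_symm_app]
      refine A.sub_mem ?_ (hA' _ _ (hA' _ _ (P _).2))
      have := hPQ ((L ^ n) x)
      rw [← eq_sub_iff_add_eq] at this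
      rw [← this]; exact (P _).2
end

section
/- Let X be a complex Banach space. The set of invertible bounded linear operators on X having the shadowing property is open in the operator-norm topology: if L is an invertible bounded linear operator on X with the shadowing property, then there is ε > 0 such that every invertible bounded linear operator L' on X with ‖L − L'‖ < ε has the shadowing property. -/
open Filter Topology

variable {X : Type*} [NormedAddCommGroup X] [NormedSpace ℂ X] [CompleteSpace X]

/-- `L` has the shadowing property. -/
def ShadowingProperty (L : X ≃L[ℂ] X) : Prop :=
  ∀ ε > (0 : ℝ), ∃ δ > (0 : ℝ), ∀ x : ℤ → X,
    (∀ n : ℤ, ‖L (x n) - x (n + 1)‖ ≤ δ) →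
    ∃ p : X, ∀ n : ℤ, ‖(L ^ n) p - x n‖ ≤ ε

lemma shadowAux_prim (g : ℤ → X) : ∃ w : ℤ → X, ∀ n, w (n + 1) - w n = g n := by
  refine ⟨fun n => ∑ i ∈ Finset.range n.toNat, g i
    - ∑ i ∈ Finset.range (-n).toNat, g (-((i : ℤ) + 1)), fun n => ?_⟩
  rcases le_or_gt 0 n with h | h
  · obtain ⟨k, rfl⟩ := Int.eq_ofNat_of_zero_le h
    have h1 : ((k : ℤ) + 1).toNat = k + 1 := by omega
    have h2 : (-((k : ℤ) + 1)).toNat = 0 := by omega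
    have h3 : (-(k : ℤ)).toNat = 0 := by omega
    simp only [h1, h2, h3, Int.toNat_natCast, Finset.sum_range_succ, Finset.range_zero,
      Finset.sum_empty]
    abel
  · obtain ⟨k, rfl⟩ : ∃ k : ℕ, n = -((k : ℤ) + 1) := ⟨(-n - 1).toNat, by omega⟩
    have h1 : (-((k : ℤ) + 1) + 1).toNat = 0 := by omega
    have h2 : (-(-((k : ℤ) + 1) + 1)).toNat = k := by omega
    have h3 : (-((k : ℤ) + 1)).toNat = 0 := by omega
    have h4 : (-(-((k : ℤ) + 1))).toNat = k + 1 := by omega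
    simp only [h1, h2, h3, h4, Finset.sum_range_succ, Finset.range_zero, Finset.sum_empty]
    abel

lemma shadowAux_zpow (L : X ≃L[ℂ] X) (n : ℤ) (v : X) : (L ^ (n + 1)) v = L ((L ^ n) v) := by
  rw [add_comm, zpow_add, zpow_one]; rfl

lemma shadowAux_zpow_neg (L : X ≃L[ℂ] X) (n : ℤ) (v : X) : (L ^ n) ((L ^ (-n)) v) = v := by
  have : (L ^ n * L ^ (-n)) v = v := by rw [← zpow_add, add_neg_cancel, zpow_zero]; rfl
  exact this

lemma shadowAux_orbit (L : X ≃L[ℂ] X) (u : ℤ → X) (h : ∀ n, u (n + 1) = L (u n)) (n : ℤ) :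
    (L ^ n) (u 0) = u n := by
  induction n using Int.induction_on with
  | zero => rw [zpow_zero]; rfl
  | succ k ih => rw [shadowAux_zpow, ih, h]
  | pred k ih =>
    apply L.injective
    rw [← shadowAux_zpow, ← h, sub_add_cancel, ih]

lemma shadowAux_solve (L : X ≃L[ℂ] X) (z : ℤ → X) : ∃ x : ℤ → X, ∀ n, L (x n) - x (n + 1) = z n := by
  obtain ⟨w, hw⟩ := shadowAux_prim (fun n => (L ^ (-(n + 1))) (z n))
  refine ⟨fun n => -(L ^ n) (w n), fun n => ?_⟩
  have h := congrArg (L ^ (n + 1)) (hw n)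
  rw [shadowAux_zpow_neg, map_sub, shadowAux_zpow L n (w n)] at h
  rw [← h, map_neg, sub_neg_eq_add]
  abel

open BoundedContinuousFunction in
/-- The operator `(T y) n = y (n+1) - A (y n)` on bounded sequences. -/
noncomputable def shadowAuxT (A : X →L[ℂ] X) : (ℤ →ᵇ X) →L[ℂ] (ℤ →ᵇ X) :=
  LinearMap.mkContinuous (𝕜 := ℂ)
    { toFun := fun y => y.compContinuous ⟨fun n : ℤ => n + 1, continuous_of_discreteTopology⟩
      map_add' := fun _ _ => rfl
      map_smul' := fun _ _ => rfl } 1 (fun y => by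
        rw [one_mul]
        exact (norm_le (norm_nonneg _)).2 fun n => y.norm_coe_le_norm (n + 1))
  - A.compLeftContinuousBounded ℤ

open BoundedContinuousFunction in
lemma shadowAuxT_apply (A : X →L[ℂ] X) (y : ℤ →ᵇ X) (n : ℤ) :
    shadowAuxT A y n = y (n + 1) - A (y n) := rfl

open BoundedContinuousFunction in
lemma shadowAux_surj (L : X ≃L[ℂ] X) (hL : ShadowingProperty L) :
    Function.Surjective (shadowAuxT (L : X →L[ℂ] X)) := by
  obtain ⟨δ, hδ, H⟩ := hL 1 one_pos
  have key : ∀ z : ℤ →ᵇ X, ‖z‖ ≤ δ → ∃ y, shadowAuxT (L : X →L[ℂ] X) y = z := by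
    intro z hz
    obtain ⟨x, hx⟩ := shadowAux_solve L z
    obtain ⟨p, hp⟩ := H x (fun n => by rw [hx]; exact (z.norm_coe_le_norm n).trans hz)
    refine ⟨ofNormedAddCommGroup (fun n : ℤ => (L ^ n) p - x n)
      continuous_of_discreteTopology 1 hp, ?_⟩
    ext n
    rw [shadowAuxT_apply]
    change (L ^ (n + 1)) p - x (n + 1) - L ((L ^ n) p - x n) = z n
    rw [shadowAux_zpow, map_sub, ← hx n]
    abel
  intro z
  have hc : 0 < δ / (‖z‖ + 1) := by positivity
  have hc' : ((δ / (‖z‖ + 1) : ℝ) : ℂ) ≠ 0 := by exact_mod_cast hc.ne'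
  obtain ⟨y, hy⟩ := key (((δ / (‖z‖ + 1) : ℝ) : ℂ) • z) (by
    rw [norm_smul, Complex.norm_real, Real.norm_of_nonneg hc.le, div_mul_eq_mul_div,
      div_le_iff₀ (by positivity)]
    nlinarith [norm_nonneg z])
  exact ⟨((δ / (‖z‖ + 1) : ℝ) : ℂ)⁻¹ • y, by rw [map_smul, hy, smul_smul, inv_mul_cancel₀ hc', one_smul]⟩

/-- The set of operators with the shadowing property is open in operator norm. -/
theorem shadowing_isOpen (L : X ≃L[ℂ] X) (hL : ShadowingProperty L) :
    ∃ ε > (0 : ℝ), ∀ L' : X ≃L[ℂ] X,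
      ‖(L : X →L[ℂ] X) - (L' : X →L[ℂ] X)‖ < ε → ShadowingProperty L' := by
  have hs := LinearMap.range_eq_top.2 (shadowAux_surj L hL)
  set T := shadowAuxT (L : X →L[ℂ] X) with hT
  have hK := ContinuousLinearMap.nonlinearRightInverseOfSurjective_nnnorm_pos T hs
  set S := ContinuousLinearMap.nonlinearRightInverseOfSurjective T hs with hS
  refine ⟨(S.nnnorm : ℝ)⁻¹, by positivity, fun L' h => ?_⟩
  set c := ‖(L : X →L[ℂ] X) - (L' : X →L[ℂ] X)‖₊ with hc
  have hcS : (0 : ℝ) < (S.nnnorm : ℝ)⁻¹ - c := sub_pos.2 h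
  have happ : ApproximatesLinearOn (shadowAuxT (L' : X →L[ℂ] X)) T Set.univ c := by
    intro a _ b _
    rw [← map_sub]
    refine (BoundedContinuousFunction.norm_le (by positivity)).2 fun n => ?_
    have : (shadowAuxT (L' : X →L[ℂ] X) (a - b) - T (a - b)) n
        = ((L : X →L[ℂ] X) - (L' : X →L[ℂ] X)) ((a - b) n) := by
      rw [BoundedContinuousFunction.sub_apply, shadowAuxT_apply, hT, shadowAuxT_apply]
      exact sub_sub_sub_cancel_left _ _ _
    rw [this]
    refine (ContinuousLinearMap.le_opNorm _ _).trans ?_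
    exact mul_le_mul_of_nonneg_left ((a - b).norm_coe_le_norm n) (norm_nonneg _)
  intro ε hε
  refine ⟨((S.nnnorm : ℝ)⁻¹ - c) * ε, by positivity, fun x hx => ?_⟩
  have hsurj := happ.surjOn_closedBall_of_nonlinearRightInverse S hε.le (b := 0)
    (Set.subset_univ _)
  obtain ⟨y, hy, hyz⟩ := hsurj (a := BoundedContinuousFunction.ofNormedAddCommGroup
    (fun n : ℤ => L' (x n) - x (n + 1)) continuous_of_discreteTopology _ hx) (by
      rw [map_zero, mem_closedBall_zero_iff]
      exact (BoundedContinuousFunction.norm_le (by positivity)).2 hx)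
  rw [mem_closedBall_zero_iff] at hy
  have ho : ∀ n, x (n + 1) + y (n + 1) = L' (x n + y n) := by
    intro n
    have h1 : y (n + 1) - L' (y n) = L' (x n) - x (n + 1) :=
      congrArg (fun f : BoundedContinuousFunction ℤ X => f n) hyz
    rw [map_add L', eq_add_of_sub_eq h1]
    abel
  refine ⟨x 0 + y 0, fun n => ?_⟩
  rw [shadowAux_orbit L' (fun n => x n + y n) ho n, add_sub_cancel_left]
  exact (y.norm_coe_le_norm n).trans hy
end

section
/- Let X be a complex Banach space and L an invertible bounded linear operator on X. Then L has the shadowing property if and only if the bounded linear operator L_∞ : ℓ^∞(X) → ℓ^∞(X) defined by (L_∞(ξ))ₙ = ξₙ₊₁ − L(ξₙ) is surjective. -/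
open Filter Topology

variable {X : Type*} [NormedAddCommGroup X] [NormedSpace ℂ X] [CompleteSpace X]

theorem exists_antidiff (f : ℤ → X) : ∃ y : ℤ → X, ∀ n : ℤ, y (n + 1) - y n = f n := by
  refine ⟨fun n => ∑ i ∈ Finset.range n.toNat, f i
    - ∑ i ∈ Finset.range (-n).toNat, f (-(i : ℤ) - 1), fun n => ?_⟩
  rcases lt_or_ge n 0 with h | h
  · obtain ⟨k, rfl⟩ : ∃ k : ℕ, n = -(k : ℤ) - 1 := ⟨(-n - 1).toNat, by omega⟩
    have h1 : (-(k : ℤ) - 1 + 1).toNat = 0 := by omega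
    have h2 : (-(k : ℤ) - 1).toNat = 0 := by omega
    have h3 : (-(-(k : ℤ) - 1 + 1)).toNat = k := by omega
    have h4 : (-(-(k : ℤ) - 1)).toNat = k + 1 := by omega
    simp only [h1, h2, h3, h4, Finset.sum_range_succ, Finset.range_zero, Finset.sum_empty]
    abel
  · obtain ⟨k, rfl⟩ : ∃ k : ℕ, n = (k : ℤ) := ⟨n.toNat, by omega⟩
    have h1 : ((k : ℤ) + 1).toNat = k + 1 := by omega
    have h2 : (k : ℤ).toNat = k := by omega
    have h3 : (-((k : ℤ) + 1)).toNat = 0 := by omega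
    have h4 : (-(k : ℤ)).toNat = 0 := by omega
    simp only [h1, h2, h3, h4, Finset.sum_range_succ, Finset.range_zero, Finset.sum_empty]
    abel

theorem zpow_succ_apply (L : X ≃L[ℂ] X) (n : ℤ) (p : X) : (L ^ (n + 1)) p = L ((L ^ n) p) := by
  rw [add_comm, zpow_add, zpow_one]; rfl

theorem exists_solution (L : X ≃L[ℂ] X) (ξ : ℤ → X) :
    ∃ x : ℤ → X, ∀ n : ℤ, x (n + 1) - L (x n) = ξ n := by
  obtain ⟨y, hy⟩ := exists_antidiff (fun n => (L ^ (n + 1)).symm (ξ n))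
  refine ⟨fun n => (L ^ n) (y n), fun n => ?_⟩
  simp only
  rw [← zpow_succ_apply, ← map_sub, hy, ContinuousLinearEquiv.apply_symm_apply]

theorem orbit_eq (L : X ≃L[ℂ] X) (z : ℤ → X) (hz : ∀ n, z (n + 1) = L (z n)) (n : ℤ) :
    (L ^ n) (z 0) = z n := by
  induction n using Int.induction_on with
  | zero => rfl
  | succ k ih => rw [zpow_succ_apply, ih, hz]
  | pred k ih =>
    apply L.injective
    rw [← zpow_succ_apply, ← hz, sub_add_cancel, ih]

/-- The operator on bounded sequences. -/
noncomputable def LinfOp (L : X ≃L[ℂ] X) :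
    BoundedContinuousFunction ℤ X →L[ℂ] BoundedContinuousFunction ℤ X :=
  LinearMap.mkContinuous
    { toFun := fun f => BoundedContinuousFunction.ofNormedAddCommGroup
        (fun n => f (n + 1) - L (f n)) continuous_of_discreteTopology
        (‖f‖ + ‖(L : X →L[ℂ] X)‖ * ‖f‖) (fun n => (norm_sub_le _ _).trans
          (add_le_add (f.norm_coe_le_norm _) (((L : X →L[ℂ] X).le_opNorm _).trans
            (mul_le_mul_of_nonneg_left (f.norm_coe_le_norm _) (norm_nonneg _)))))
      map_add' := fun f g => by ext n; simp; abel
      map_smul' := fun c f => by ext n; simp [smul_sub] }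
    (1 + ‖(L : X →L[ℂ] X)‖) (fun f => by
      rw [add_mul, one_mul]
      refine (BoundedContinuousFunction.norm_le
        (add_nonneg (norm_nonneg f) (mul_nonneg (norm_nonneg _) (norm_nonneg f)))).2 ?_
      exact fun n => (norm_sub_le _ _).trans
          (add_le_add (f.norm_coe_le_norm _) (((L : X →L[ℂ] X).le_opNorm _).trans
            (mul_le_mul_of_nonneg_left (f.norm_coe_le_norm _) (norm_nonneg _)))))

theorem LinfOp_apply (L : X ≃L[ℂ] X) (f : BoundedContinuousFunction ℤ X) (n : ℤ) :
    LinfOp L f n = f (n + 1) - L (f n) := rfl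

/-- `L` has the shadowing property iff the operator
`L_∞ : ℓ^∞(X) → ℓ^∞(X)`, `(L_∞ ξ)ₙ = ξₙ₊₁ - L ξₙ`, is surjective
(surjectivity stated concretely on bounded two-sided sequences). -/
theorem shadowing_iff_Linfty_surjective (L : X ≃L[ℂ] X) :
    ShadowingProperty L ↔
      ∀ ξ : ℤ → X, (∃ M : ℝ, ∀ n : ℤ, ‖ξ n‖ ≤ M) →
        ∃ η : ℤ → X, (∃ M : ℝ, ∀ n : ℤ, ‖η n‖ ≤ M) ∧
          ∀ n : ℤ, η (n + 1) - L (η n) = ξ n := by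
  constructor
  · intro h ξ ⟨M, hM⟩
    obtain ⟨δ, hδ, H⟩ := h 1 one_pos
    obtain ⟨x, hx⟩ := exists_solution L ξ
    have hM0 : 0 ≤ M := (norm_nonneg _).trans (hM 0)
    set c : ℝ := δ / (M + 1) with hc
    have hc0 : 0 < c := by positivity
    have hcC : (c : ℂ) ≠ 0 := by exact_mod_cast hc0.ne'
    obtain ⟨p, hp⟩ := H (fun n => (c : ℂ) • x n) (fun n => by
      rw [map_smul, ← smul_sub, ← neg_sub, hx, smul_neg, norm_neg, norm_smul, Complex.norm_real,
        Real.norm_of_nonneg hc0.le, hc, div_mul_eq_mul_div, div_le_iff₀ (by positivity)]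
      exact mul_le_mul_of_nonneg_left ((hM n).trans (by linarith)) hδ.le)
    refine ⟨fun n => x n - (c : ℂ)⁻¹ • (L ^ n) p, ⟨c⁻¹, fun n => ?_⟩, fun n => ?_⟩
    · have e : x n - (c : ℂ)⁻¹ • (L ^ n) p = -((c : ℂ)⁻¹ • ((L ^ n) p - (c : ℂ) • x n)) := by
        rw [smul_sub, inv_smul_smul₀ hcC, neg_sub]
      beta_reduce
      rw [e, norm_neg, norm_smul, norm_inv, Complex.norm_real, Real.norm_of_nonneg hc0.le]
      exact mul_le_of_le_one_right (by positivity) (hp n)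
    · beta_reduce
      rw [zpow_succ_apply, map_sub, map_smul, sub_sub_sub_cancel_right, hx]
  · intro h
    have hs : Function.Surjective (LinfOp L) := by
      intro g
      obtain ⟨η, ⟨M, hM⟩, hη⟩ := h g ⟨‖g‖, g.norm_coe_le_norm⟩
      refine ⟨BoundedContinuousFunction.ofNormedAddCommGroup η
        continuous_of_discreteTopology M hM, ?_⟩
      ext n
      exact hη n
    obtain ⟨C, hC, H⟩ := (LinfOp L).exists_preimage_norm_le hs
    intro ε hε
    refine ⟨ε / C, by positivity, fun x hx => ?_⟩
    let g : BoundedContinuousFunction ℤ X := BoundedContinuousFunction.ofNormedAddCommGroup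
      (fun n => x (n + 1) - L (x n)) continuous_of_discreteTopology (ε / C)
      (fun n => by rw [norm_sub_rev]; exact hx n)
    have hg : ‖g‖ ≤ ε / C :=
      BoundedContinuousFunction.norm_ofNormedAddCommGroup_le _ (by positivity) _
    obtain ⟨f, hf, hfn⟩ := H g
    have hf2 : ∀ n, f (n + 1) - L (f n) = x (n + 1) - L (x n) := fun n => by
      rw [← LinfOp_apply, hf]; rfl
    refine ⟨x 0 - f 0, fun n => ?_⟩
    have := orbit_eq L (fun n => x n - f n) (fun n => by
      rw [map_sub, ← sub_eq_zero]
      have := sub_eq_zero.2 (hf2 n)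
      rw [← neg_eq_zero, ← this]
      abel) n
    rw [this, sub_sub_cancel_left, norm_neg]
    calc ‖f n‖ ≤ ‖f‖ := f.norm_coe_le_norm n
      _ ≤ C * ‖g‖ := hfn
      _ ≤ C * (ε / C) := by gcongr
      _ = ε := by field_simp
end

section
/- Let X be a complex Banach space and L an invertible bounded linear operator on X with the shadowing property. If L is expansive, or more generally if L is asymptotically expansive, then L is uniformly expansive. -/
open Filter Topology

variable {X : Type*} [NormedAddCommGroup X] [NormedSpace ℂ X] [CompleteSpace X]

/-- `L` is expansive. -/
def Expansive (L : X ≃L[ℂ] X) : Prop :=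
  ∃ ε > (0 : ℝ), ∀ x : X, (∀ n : ℤ, ‖(L ^ n) x‖ ≤ ε) → x = 0

/-- `L` is asymptotically expansive. -/
def AsymptoticallyExpansive (L : X ≃L[ℂ] X) : Prop :=
  ∃ ε > (0 : ℝ), ∀ x : X, (∀ n : ℕ, ‖(L ^ n) x‖ ≤ ε) →
    Tendsto (fun n : ℕ => (L ^ n) x) atTop (𝓝 0)

/-- `L` is uniformly expansive. -/
def UniformlyExpansive (L : X ≃L[ℂ] X) : Prop :=
  ∃ m : ℕ, 0 < m ∧ ∀ x : X, ‖x‖ = 1 →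
    2 ≤ ‖(L ^ m) x‖ ∨ 2 ≤ ‖(L.symm ^ m) x‖

theorem aux_solve (L : X ≃L[ℂ] X) (hsh : ShadowingProperty L) :
    ∃ K > (0 : ℝ), ∀ z : ℕ → X, (∀ n, ‖z n‖ ≤ 1) →
      ∃ y : ℕ → X, (∀ n, ‖y n‖ ≤ K) ∧ ∀ n, y (n + 1) = L (y n) + z n := by
  obtain ⟨δ, hδ, h⟩ := hsh 1 one_pos
  refine ⟨δ⁻¹, inv_pos.2 hδ, fun z hz => ?_⟩
  let s : ℕ → X := fun n => Nat.rec 0 (fun n a => L a + (δ : ℂ) • z n) n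
  have s0 : s 0 = 0 := rfl
  have s1 : ∀ n, s (n + 1) = L (s n) + (δ : ℂ) • z n := fun n => rfl
  obtain ⟨p, hp⟩ := h (fun n => s n.toNat) (by
    intro n
    rcases le_or_gt 0 n with hn | hn
    · lift n to ℕ using hn
      have : ((n : ℤ) + 1).toNat = n + 1 := by omega
      simp only [this, s1, Int.toNat_natCast, sub_add_cancel_left, norm_neg, norm_smul]
      simp only [Complex.norm_real, Real.norm_eq_abs, abs_of_pos hδ]
      nlinarith [hz n]
    · have h1 : n.toNat = 0 := by omega
      have h2 : (n + 1).toNat = 0 := by omega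
      simp [h1, h2, s0, hδ.le])
  have hδ' : (δ : ℂ) ≠ 0 := by exact_mod_cast hδ.ne'
  refine ⟨fun n => (δ : ℂ)⁻¹ • (s n - (L ^ n) p), fun n => ?_, fun n => ?_⟩
  · have := hp n
    simp only [zpow_natCast, Int.toNat_natCast] at this
    rw [norm_smul, norm_inv, Complex.norm_real, Real.norm_eq_abs, abs_of_pos hδ, norm_sub_rev]
    have h3 := inv_pos.2 hδ
    nlinarith
  · have : (L ^ (n + 1)) p = L ((L ^ n) p) := by rw [pow_succ']; rfl
    simp only [s1, this, map_smul, map_sub]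
    rw [add_sub_right_comm, smul_add, smul_smul, inv_mul_cancel₀ hδ', one_smul]

theorem aux_approx (L : X ≃L[ℂ] X) (K : ℝ)
    (hK : ∀ z : ℕ → X, (∀ n, ‖z n‖ ≤ 1) →
      ∃ y : ℕ → X, (∀ n, ‖y n‖ ≤ K) ∧ ∀ n, y (n + 1) = L (y n) + z n)
    (μ : ℂ) (hμ : ‖μ‖ = 1) (z : X) (hz : ‖z‖ ≤ 1) :
    ∃ W : X, ‖W‖ ≤ K ∧ ‖z - (W - μ • L W)‖ ≤ 1 / 2 := by
  have hμ0 : μ ≠ 0 := by rintro rfl; simp at hμ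
  obtain ⟨y, hy, hy1⟩ := hK (fun n => (μ ^ (n + 1))⁻¹ • z) (by
    intro n; simpa [norm_smul, hμ] using hz)
  let w : ℕ → X := fun n => μ ^ n • y n
  have hw : ∀ n, ‖w n‖ ≤ K := fun n => by simpa [w, norm_smul, hμ] using hy n
  have hw1 : ∀ n, w (n + 1) = μ • L (w n) + z := by
    intro n
    simp only [w, hy1, smul_add, map_smul, smul_smul]
    rw [mul_inv_cancel₀ (pow_ne_zero _ hμ0), one_smul, pow_succ']
  have hsum : ∀ N : ℕ, (∑ n ∈ Finset.range N, w n) - μ • L (∑ n ∈ Finset.range N, w n)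
      = w 0 - w N + (N : ℂ) • z := by
    intro N
    induction N with
    | zero => simp
    | succ N ih =>
      rw [Finset.sum_range_succ, map_add, smul_add, add_sub_add_comm, ih, hw1 N]
      push_cast
      rw [add_smul, one_smul]; abel
  obtain ⟨N, hN⟩ := exists_nat_gt (4 * K + 1)
  have hK0 : 0 ≤ K := (norm_nonneg _).trans (hw 0)
  have hNpos : (0 : ℝ) < N := by linarith
  have hN0 : (N : ℂ) ≠ 0 := by
    have : N ≠ 0 := by rintro rfl; simp at hNpos
    exact_mod_cast this
  refine ⟨(N : ℂ)⁻¹ • ∑ n ∈ Finset.range N, w n, ?_, ?_⟩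
  · rw [norm_smul, norm_inv, Complex.norm_natCast, inv_mul_le_iff₀ hNpos]
    refine (norm_sum_le _ _).trans ((Finset.sum_le_sum fun n _ => hw n).trans ?_)
    simp
  · rw [map_smul, smul_comm μ, ← smul_sub, hsum, smul_add, smul_smul, inv_mul_cancel₀ hN0, one_smul,
      sub_add_cancel_right, norm_neg, norm_smul, norm_inv, Complex.norm_natCast,
      inv_mul_le_iff₀ hNpos]
    have := norm_sub_le (w 0) (w N)
    linarith [hw 0, hw N]

theorem aux_preimage (f : X →L[ℂ] X) (K : ℝ)
    (h : ∀ z : X, ‖z‖ ≤ 1 → ∃ W : X, ‖W‖ ≤ K ∧ ‖z - f W‖ ≤ 1 / 2) (z : X) :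
    ∃ x, f x = z ∧ ‖x‖ ≤ 2 * K * ‖z‖ := by
  have h' : ∀ z : X, ∃ W : X, ‖W‖ ≤ K * ‖z‖ ∧ ‖z - f W‖ ≤ 1 / 2 * ‖z‖ := by
    intro z
    by_cases hz : z = 0
    · exact ⟨0, by simp [hz]⟩
    have hz0 : (0 : ℝ) < ‖z‖ := norm_pos_iff.2 hz
    have hzc : (‖z‖ : ℂ) ≠ 0 := by exact_mod_cast hz0.ne'
    obtain ⟨W, hW, hW1⟩ := h ((‖z‖ : ℂ)⁻¹ • z) (by
      rw [norm_smul, norm_inv, Complex.norm_real, norm_norm, inv_mul_cancel₀ hz0.ne'])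
    refine ⟨(‖z‖ : ℂ) • W, ?_, ?_⟩
    · rw [norm_smul, Complex.norm_real, norm_norm, mul_comm]; gcongr
    · have : z - f ((‖z‖ : ℂ) • W) = (‖z‖ : ℂ) • ((‖z‖ : ℂ)⁻¹ • z - f W) := by
        rw [smul_sub, smul_smul, mul_inv_cancel₀ hzc, one_smul, map_smul]
      rw [this, norm_smul, Complex.norm_real, norm_norm, mul_comm]; gcongr
  choose g hg hg1 using h'
  let r : ℕ → X := fun n => Nat.rec z (fun _ a => a - f (g a)) n
  have r0 : r 0 = z := rfl
  have r1 : ∀ n, r (n + 1) = r n - f (g (r n)) := fun n => rfl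
  have hr : ∀ n, ‖r n‖ ≤ (1 / 2) ^ n * ‖z‖ := by
    intro n
    induction n with
    | zero => simp [r0]
    | succ n ih =>
      rw [r1]
      refine (hg1 _).trans ?_
      rw [pow_succ']
      linarith
  have hK0 : 0 ≤ K := by
    obtain ⟨W, hW, _⟩ := h 0 (by simp)
    exact (norm_nonneg _).trans hW
  have hb : ∀ n, ‖g (r n)‖ ≤ K * ‖z‖ * (1 / 2) ^ n := by
    intro n
    refine (hg _).trans ?_
    calc K * ‖r n‖ ≤ K * ((1 / 2) ^ n * ‖z‖) := by gcongr; exact hr n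
      _ = _ := by ring
  have hgeo : HasSum (fun n : ℕ => K * ‖z‖ * (1 / 2 : ℝ) ^ n) (K * ‖z‖ * 2) :=
    hasSum_geometric_two.mul_left _
  have hs : Summable (fun n => g (r n)) := Summable.of_norm_bounded hgeo.summable hb
  refine ⟨∑' n, g (r n), ?_, ?_⟩
  · have h1 := (f.hasSum hs.hasSum).tendsto_sum_nat
    have h2 : ∀ N, ∑ n ∈ Finset.range N, f (g (r n)) = z - r N := by
      intro N
      induction N with
      | zero => simp [r0]
      | succ N ih => rw [Finset.sum_range_succ, ih, r1]; abel
    simp only [h2] at h1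
    have h3 : Tendsto r atTop (𝓝 0) := by
      refine squeeze_zero_norm hr ?_
      simpa using (tendsto_pow_atTop_nhds_zero_of_lt_one (r := (1 / 2 : ℝ)) (by norm_num)
        (by norm_num)).mul_const ‖z‖
    have h4 : Tendsto (fun N => z - r N) atTop (𝓝 z) := by
      simpa using tendsto_const_nhds.sub h3
    exact tendsto_nhds_unique h1 h4
  · refine (tsum_of_norm_bounded hgeo hb).trans (le_of_eq (by ring))

theorem aux_inj (L : X ≃L[ℂ] X) (hexp : Expansive L ∨ AsymptoticallyExpansive L)
    (μ : ℂ) (hμ : ‖μ‖ = 1) (x : X) (hx : x - μ • L x = 0) : x = 0 := by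
  by_contra hx0
  have hμ0 : μ ≠ 0 := by rintro rfl; simp at hμ
  have hL : ∀ v : X, v = μ • L v → ∀ n : ℤ, ‖(L ^ n) v‖ = ‖v‖ := by
    intro v hv n
    have hN : ∀ v : X, ∀ n : ℕ, v = μ • L v → ‖(L ^ n) v‖ = ‖v‖ := by
      intro v n hv
      induction n with
      | zero => rfl
      | succ n ih =>
        rw [← ih, pow_succ]
        nth_rewrite 2 [hv]
        rw [map_smul, norm_smul, hμ, one_mul]
        rfl
    obtain ⟨k, rfl | rfl⟩ := n.eq_nat_or_neg
    · rw [zpow_natCast, hN v k hv]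
    · have h1 : (L ^ k) ((L ^ (-(k : ℤ))) v) = v := by
        rw [zpow_neg, zpow_natCast]
        change (L ^ k * (L ^ k)⁻¹) v = v
        rw [mul_inv_cancel]; rfl
      have h2 : (L ^ (-(k : ℤ))) v = μ • L ((L ^ (-(k : ℤ))) v) := by
        have : L ((L ^ (-(k : ℤ))) v) = (L ^ (-(k : ℤ))) (L v) := by
          change (L * L ^ (-(k : ℤ))) v = (L ^ (-(k : ℤ)) * L) v
          rw [← zpow_one_add, ← zpow_add_one, add_comm]
        rw [this, ← map_smul, ← hv]
      have := hN _ k h2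
      rw [h1] at this
      exact this.symm
  have hxpos : (0 : ℝ) < ‖x‖ := norm_pos_iff.2 hx0
  have key : ∀ ε > (0 : ℝ), ∃ v : X, ‖v‖ = ε ∧ ∀ n : ℤ, ‖(L ^ n) v‖ = ε := by
    intro ε hε
    have hn : ‖((ε / ‖x‖ : ℝ) : ℂ) • x‖ = ε := by
      rw [norm_smul, Complex.norm_real, Real.norm_eq_abs, abs_of_pos (by positivity)]
      field_simp
    refine ⟨((ε / ‖x‖ : ℝ) : ℂ) • x, hn, fun n => (hL _ ?_ n).trans hn⟩
    rw [map_smul, smul_comm, ← sub_eq_zero.1 hx]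
  rcases hexp with ⟨ε, hε, h⟩ | ⟨ε, hε, h⟩
  · obtain ⟨v, hv, hv1⟩ := key ε hε
    have := h v fun n => (hv1 n).le
    rw [this, norm_zero] at hv
    exact hε.ne hv
  · obtain ⟨v, hv, hv1⟩ := key ε hε
    have hv2 : ∀ n : ℕ, ‖(L ^ n) v‖ = ε := fun n => by simpa using hv1 n
    have := (h v fun n => (hv2 n).le).norm
    simp only [hv2, norm_zero] at this
    exact hε.ne' (tendsto_nhds_unique tendsto_const_nhds this)

theorem aux_root_sum (N : ℕ) (ζ : ℂ) (hζ : IsPrimitiveRoot ζ N) (m : ℕ) :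
    ∑ k ∈ Finset.range N, ζ ^ (k * m) = if N ∣ m then (N : ℂ) else 0 := by
  have : ∀ k, ζ ^ (k * m) = (ζ ^ m) ^ k := fun k => by rw [← pow_mul, mul_comm]
  simp only [this]
  split_ifs with h
  · rw [(hζ.pow_eq_one_iff_dvd m).2 h]; simp
  · have h1 : ζ ^ m ≠ 1 := fun h1 => h ((hζ.pow_eq_one_iff_dvd m).1 h1)
    rw [geom_sum_eq h1, ← pow_mul, mul_comm, pow_mul, hζ.pow_eq_one]; simp

theorem aux_fejer (N : ℕ) (hN : 0 < N) (ζ : ℂ) (hζ : IsPrimitiveRoot ζ N) (B : X →L[ℂ] X) :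
    ∑ k ∈ Finset.range N, (∑ j ∈ Finset.range N, (ζ ^ k • B) ^ j) ^ 2
      = (N : ℂ) • (1 + ((N : ℂ) - 1) • B ^ N) := by
  have h1 : ∀ k, (∑ j ∈ Finset.range N, (ζ ^ k • B) ^ j) ^ 2
      = ∑ i ∈ Finset.range N, ∑ j ∈ Finset.range N, ζ ^ (k * (i + j)) • B ^ (i + j) := by
    intro k
    rw [sq, Finset.sum_mul_sum]
    refine Finset.sum_congr rfl fun i _ => Finset.sum_congr rfl fun j _ => ?_
    rw [← pow_add, smul_pow, ← pow_mul]
  simp only [h1]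
  rw [Finset.sum_comm]
  have h2 : ∀ i ∈ Finset.range N, ∑ k ∈ Finset.range N, ∑ j ∈ Finset.range N,
      ζ ^ (k * (i + j)) • B ^ (i + j) = (N : ℂ) • (if i = 0 then 1 else B ^ N) := by
    intro i hi
    rw [Finset.mem_range] at hi
    rw [Finset.sum_comm]
    simp only [← Finset.sum_smul, aux_root_sum N ζ hζ]
    split_ifs with h
    · subst h
      rw [Finset.sum_eq_single 0]
      · simp
      · intro j hj hj0
        rw [if_neg, zero_smul]
        intro hd
        have := Nat.le_of_dvd (by omega) hd
        rw [Finset.mem_range] at hj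
        omega
      · intro h; simp at h; omega
    · rw [Finset.sum_eq_single (N - i)]
      · have : i + (N - i) = N := by omega
        simp [this]
      · intro j hj hj0
        rw [Finset.mem_range] at hj
        rw [if_neg, zero_smul]
        rintro ⟨c, hc⟩
        have hc1 : c = 1 := by
          have : c < 2 := by by_contra hh; nlinarith
          have : c ≠ 0 := by rintro rfl; simp at hc; omega
          omega
        subst hc1
        omega
      · intro h; simp at h; omega
  rw [Finset.sum_congr rfl h2, ← Finset.smul_sum]
  congr 1
  obtain ⟨M, rfl⟩ : ∃ M, N = M + 1 := ⟨N - 1, by omega⟩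
  rw [Finset.sum_range_succ']
  simp [add_comm, Nat.cast_smul_eq_nsmul]

theorem uniformlyExpansive_of_shadowing (L : X ≃L[ℂ] X)
    (hsh : ShadowingProperty L)
    (hexp : Expansive L ∨ AsymptoticallyExpansive L) :
    UniformlyExpansive L := by
  obtain ⟨K, hK0, hK⟩ := aux_solve L hsh
  have hC : ∀ μ : ℂ, ‖μ‖ = 1 → ∀ x : X,
      ‖x‖ ≤ 2 * K * ‖(1 - μ • (L : X →L[ℂ] X)) x‖ := by
    intro μ hμ x
    obtain ⟨x', hx', hb⟩ := aux_preimage (1 - μ • (L : X →L[ℂ] X)) K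
      (fun z hz => by simpa using aux_approx L K hK μ hμ z hz) ((1 - μ • (L : X →L[ℂ] X)) x)
    have : x' - x = 0 := aux_inj L hexp μ hμ _ (by
      have h := sub_eq_zero.2 hx'
      rw [← map_sub] at h
      simpa using h)
    rwa [sub_eq_zero.1 this] at hb
  obtain ⟨N, hN⟩ := exists_nat_gt ((2 * K) ^ 2 * 6 + 3)
  have hNpos : 0 < N := by
    have : (0 : ℝ) < N := by nlinarith
    exact_mod_cast this
  refine ⟨N, hNpos, fun x hx => ?_⟩
  by_contra! hcon
  obtain ⟨hc1, hc2⟩ := hcon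
  set B : X →L[ℂ] X := (L : X →L[ℂ] X) with hB
  set v : X := (L.symm ^ N) x with hv
  have hBpow : ∀ n (a : X), (B ^ n) a = (L ^ n) a := by
    intro n a
    induction n with
    | zero => rfl
    | succ n ih =>
      rw [pow_succ', pow_succ']
      change B ((B ^ n) a) = L ((L ^ n) a)
      rw [ih]; rfl
  have hBv : (B ^ N) v = x := by
    rw [hBpow, hv]
    change (L ^ N * L⁻¹ ^ N) x = x
    rw [inv_pow, mul_inv_cancel]; rfl
  have hζ := Complex.isPrimitiveRoot_exp N hNpos.ne'
  set ζ := Complex.exp (2 * Real.pi * Complex.I / N)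
  have hζn : ‖ζ‖ = 1 := hζ.norm'_eq_one hNpos.ne'
  have hu : ((1 - B ^ N) ^ 2 : X →L[ℂ] X) v = v - x - (x - (B ^ N) x) := by
    rw [sq]
    change (1 - B ^ N : X →L[ℂ] X) ((1 - B ^ N : X →L[ℂ] X) v) = _
    have h1 : ∀ a : X, (1 - B ^ N : X →L[ℂ] X) a = a - (B ^ N) a := fun a => rfl
    rw [h1, h1, map_sub, hBv]
  have hun : ‖((1 - B ^ N) ^ 2 : X →L[ℂ] X) v‖ ≤ 6 := by
    rw [hu]
    have a1 := norm_sub_le (v - x) (x - (B ^ N) x)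
    have a2 := norm_sub_le v x
    have a3 := norm_sub_le x ((B ^ N) x)
    rw [hBpow] at *
    linarith
  have hP : ∀ k ∈ Finset.range N,
      ‖((∑ j ∈ Finset.range N, (ζ ^ k • B) ^ j) ^ 2) v‖ ≤ (2 * K) ^ 2 * 6 := by
    intro k _
    have hm : ‖ζ ^ k‖ = 1 := by simp [hζn]
    set P := ∑ j ∈ Finset.range N, (ζ ^ k • B) ^ j with hPdef
    have e1 : (1 - ζ ^ k • B) * P = 1 - B ^ N := by
      rw [hPdef, mul_neg_geom_sum, smul_pow, ← pow_mul, mul_comm, pow_mul, hζ.pow_eq_one, one_pow,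
        one_smul]
    have e1' : P * (1 - ζ ^ k • B) = 1 - B ^ N := by
      rw [hPdef, geom_sum_mul_neg, smul_pow, ← pow_mul, mul_comm, pow_mul, hζ.pow_eq_one, one_pow,
        one_smul]
    have hcomm : Commute (1 - ζ ^ k • B) P := e1.trans e1'.symm
    have e2 : (1 - ζ ^ k • B) * ((1 - ζ ^ k • B) * P ^ 2) = (1 - B ^ N) ^ 2 := by
      rw [← mul_assoc, ← sq, ← hcomm.mul_pow, e1]
    have b1 := hC _ hm ((P ^ 2) v)
    have b2 := hC _ hm ((1 - ζ ^ k • B) ((P ^ 2) v))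
    have e3 : (1 - ζ ^ k • B) ((1 - ζ ^ k • B) ((P ^ 2) v)) = ((1 - B ^ N) ^ 2 : X →L[ℂ] X) v := by
      rw [← e2]; rfl
    rw [e3] at b2
    calc _ ≤ _ := b1
      _ ≤ 2 * K * (2 * K * 6) := by
        gcongr
        exact b2.trans (by gcongr)
      _ = _ := by ring
  have hF := congrArg (fun T : X →L[ℂ] X => T v) (aux_fejer N hNpos ζ hζ B)
  simp only [ContinuousLinearMap.sum_apply, ContinuousLinearMap.smul_apply,
    ContinuousLinearMap.add_apply, ContinuousLinearMap.one_apply, hBv] at hF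
  have hle := (norm_sum_le _ _).trans (Finset.sum_le_sum hP)
  rw [hF, norm_smul, Complex.norm_natCast, Finset.sum_const, Finset.card_range, nsmul_eq_mul] at hle
  have hNr : (0 : ℝ) < N := by exact_mod_cast hNpos
  have hle2 := le_of_mul_le_mul_left hle hNr
  have hn1 : ‖((N : ℂ) - 1) • x‖ = N - 1 := by
    rw [norm_smul, hx, mul_one]
    have : (N : ℂ) - 1 = ((N - 1 : ℝ) : ℂ) := by push_cast; rfl
    rw [this, Complex.norm_real, Real.norm_eq_abs, abs_of_nonneg]
    nlinarith
  have := norm_sub_le (v + ((N : ℂ) - 1) • x) v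
  rw [add_sub_cancel_left, hn1] at this
  linarith
end
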